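/- Let s ≥ 7 and set A(c) = 7c/(30Q) + 1 − 7/(10Q). Then the function c ↦ OPT(A(c), c, s) is strictly increasing on 1 ≤ c < 3. -/

import Mathlib

/-- `q(x) = exp(x) - x - 1`. -/
noncomputable def q (x : ℝ) : ℝ := Real.exp x - x - 1

/-- `Q(x) = x·(exp(x) − 1)/(exp(x) − x − 1)`. -/
noncomputable def Qf (x : ℝ) : ℝ := x * (Real.exp x - 1) / (Real.exp x - x - 1)

/-- `OPT(a,c,s) = (3·q(sa)/q(s) + 1)·(1/(1+ac))^Q·((1+c)^Q + 3·(1−c/3)^Q)` with `Q = Q(s)`. -/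
noncomputable def OPT4 (a c s : ℝ) : ℝ :=
  (3 * q (s*a) / q s + 1) * (1/(1+a*c)) ^ (Qf s) *
  ((1+c) ^ (Qf s) + 3 * (1 - c/3) ^ (Qf s))

/-!
Along the line `a = A(c)` the three factors of `OPT(a, c, s)` are positive, so it suffices to bound
their logarithmic derivatives, whose sum vanishes at `c = 3`. With `v = 7 (3 - c) / 30` we have
`A(c) = 1 - v / Q` and `A' = 7 / (30 Q)`, and

* the first factor contributes at least `7/30 · 3 (1 - v) / (4 - 3 v)`, because `q` is
  log-concave and `x / (exp x - 1)` decreases;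
* the third one contributes `Q / (1 + c)` up to an error `O(Q t ^ (Q - 1))` with
  `t = (3 - c) / (3 (1 + c)) ≤ 1/3`, and `Q t ^ (Q - 1)` decreases in `Q`;
* `Q / (1 + c)` nearly cancels the contribution `- Q (1 + A c)' / (1 + A c)` of the second one.

What remains is a polynomial inequality in `c`, in which `3 - c` factors out.
-/

open Set

section LogDeriv

lemma strictMonoOn_of_logDeriv_pos {D : Set ℝ} (hD : Convex ℝ D) {f : ℝ → ℝ}
    (hf : ContinuousOn f D) (hpos : ∀ x ∈ interior D, 0 < f x)
    (hlog : ∀ x ∈ interior D, 0 < logDeriv f x) : StrictMonoOn f D :=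
  strictMonoOn_of_deriv_pos hD hf fun x hx => (div_pos_iff_of_pos_right (hpos x hx)).1 (hlog x hx)

lemma logDeriv_fun_rpow_const {f : ℝ → ℝ} {x : ℝ} (hf : DifferentiableAt ℝ f x) (hx : 0 < f x)
    (p : ℝ) : logDeriv (fun y => f y ^ p) x = p * logDeriv f x := by
  have hpow : f x ^ p ≠ 0 := (Real.rpow_pos_of_pos hx p).ne'
  rw [logDeriv_apply, logDeriv_apply, (hf.hasDerivAt.rpow_const (Or.inl hx.ne')).deriv,
    Real.rpow_sub_one hx.ne']
  field_simp

lemma logDeriv_one_div_rpow_const {f : ℝ → ℝ} {x : ℝ} (hf : DifferentiableAt ℝ f x)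
    (hx : 0 < f x) (p : ℝ) : logDeriv (fun y => (1 / f y) ^ p) x = -(p * logDeriv f x) := by
  have hinv : logDeriv (fun y => 1 / f y) x = -logDeriv f x := by
    rw [logDeriv_div x one_ne_zero hx.ne' (differentiableAt_const 1) hf, logDeriv_const,
      Pi.zero_apply, zero_sub]
  have hdiff : DifferentiableAt ℝ (fun y => 1 / f y) x := (differentiableAt_const 1).div hf hx.ne'
  rw [logDeriv_fun_rpow_const hdiff (one_div_pos.2 hx), hinv, mul_neg]

end LogDeriv

lemma antitoneOn_mul_rpow_sub_one {t : ℝ} (ht₀ : 0 < t) (ht : t ≤ Real.exp (-1)) :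
    AntitoneOn (fun p : ℝ => p * t ^ (p - 1)) (Ici 1) := by
  intro p (hp : 1 ≤ p) r _ hpr
  have hr : r ≤ p * Real.exp (r - p) := by
    nlinarith [Real.add_one_le_exp (r - p)]
  have hpow : t ^ (r - p) ≤ Real.exp (-(r - p)) := by
    calc t ^ (r - p) ≤ Real.exp (-1) ^ (r - p) := by gcongr
      _ = Real.exp (-(r - p)) := by rw [← Real.exp_mul, neg_one_mul]
  calc r * t ^ (r - 1) = r * t ^ (r - p) * t ^ (p - 1) := by
        rw [mul_assoc, ← Real.rpow_add ht₀]; ring_nf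
    _ ≤ p * Real.exp (r - p) * Real.exp (-(r - p)) * t ^ (p - 1) := by gcongr
    _ = p * t ^ (p - 1) := by
        rw [mul_assoc p, ← Real.exp_add, add_neg_cancel, Real.exp_zero, mul_one]

lemma mul_rpow_sub_one_le_mul_pow {t p : ℝ} (ht₀ : 0 < t) (ht : t ≤ Real.exp (-1)) {n : ℕ}
    (hp : n + 1 ≤ p) : p * t ^ (p - 1) ≤ (n + 1) * t ^ n := by
  have hn : (1 : ℝ) ≤ n + 1 := le_add_of_nonneg_left n.cast_nonneg
  simpa using antitoneOn_mul_rpow_sub_one ht₀ ht (mem_Ici.2 hn) (mem_Ici.2 (hn.trans hp)) hp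

section PowerSum

/-- The last factor `(1 + c)^Q + 3 (1 - c/3)^Q` of `OPT4`, with the exponent as a free parameter. -/
noncomputable def powerSum (Q c : ℝ) : ℝ := (1 + c) ^ Q + 3 * (1 - c / 3) ^ Q

variable {Q c : ℝ}

lemma powerSum_pos (hc : c ∈ Ioc (-1) 3) : 0 < powerSum Q c :=
  add_pos_of_pos_of_nonneg (Real.rpow_pos_of_pos (by linarith [hc.1]) Q)
    (mul_nonneg zero_le_three (Real.rpow_nonneg (by linarith [hc.2]) Q))

lemma hasDerivAt_powerSum (hQ : 1 ≤ Q) :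
    HasDerivAt (powerSum Q) (Q * ((1 + c) ^ (Q - 1) - (1 - c / 3) ^ (Q - 1))) c := by
  have hplus : HasDerivAt (fun x : ℝ => (1 + x) ^ Q) (1 * Q * (1 + c) ^ (Q - 1)) c :=
    ((hasDerivAt_id c).const_add 1).rpow_const (Or.inr hQ)
  have hminus : HasDerivAt (fun x : ℝ => (1 - x / 3) ^ Q)
      (-(1 / 3) * Q * (1 - c / 3) ^ (Q - 1)) c :=
    (((hasDerivAt_id c).div_const 3).const_sub 1).rpow_const (Or.inr hQ)
  exact (hplus.add (hminus.const_mul 3)).congr_deriv (by ring)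

lemma le_logDeriv_powerSum (hQ : 1 ≤ Q) (hc : c ∈ Ioo (-1) 3) :
    Q / (1 + c) - 4 * (Q * ((1 - c / 3) / (1 + c)) ^ (Q - 1)) / (1 + c) ^ 2
      ≤ logDeriv (powerSum Q) c := by
  have hp : 0 < 1 + c := by linarith [hc.1]
  have hm : 0 < 1 - c / 3 := by linarith [hc.2]
  rw [logDeriv_apply, (hasDerivAt_powerSum hQ).deriv, powerSum, Real.div_rpow hm.le hp.le,
    ← div_mul_cancel₀ ((1 + c) ^ Q) hp.ne', ← Real.rpow_sub_one hp.ne',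
    ← div_mul_cancel₀ ((1 - c / 3) ^ Q) hm.ne', ← Real.rpow_sub_one hm.ne']
  have hX : 0 < (1 + c) ^ (Q - 1) := Real.rpow_pos_of_pos hp _
  have hY : 0 < (1 - c / 3) ^ (Q - 1) := Real.rpow_pos_of_pos hm _
  generalize (1 + c) ^ (Q - 1) = X at *
  generalize (1 - c / 3) ^ (Q - 1) = Y at *
  have hYm : 0 < 3 * (Y * (1 - c / 3)) := by positivity
  calc Q / (1 + c) - 4 * (Q * (Y / X)) / (1 + c) ^ 2
      = Q / (1 + c) - 4 * Q * Y / ((1 + c) * (X * (1 + c))) := by field_simp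
    _ ≤ Q / (1 + c) - 4 * Q * Y / ((1 + c) * (X * (1 + c) + 3 * (Y * (1 - c / 3)))) := by
        gcongr
        exact le_add_of_nonneg_right hYm.le
    _ = Q * (X - Y) / (X * (1 + c) + 3 * (Y * (1 - c / 3))) := by
        have hS : X * (1 + c) + 3 * (Y * (1 - c / 3)) ≠ 0 := by positivity
        rw [div_sub_div _ _ hp.ne' (mul_ne_zero hp.ne' hS),
          div_eq_div_iff (mul_ne_zero hp.ne' (mul_ne_zero hp.ne' hS)) hS]
        ring

lemma le_logDeriv_powerSum_of_five_le (hQ : 5 ≤ Q) (hc : c ∈ Ico 1 3) :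
    Q / (1 + c) - (3 - c) ^ 2 / (30 * (1 + c)) ≤ logDeriv (powerSum Q) c := by
  obtain ⟨hc₁, hc₃⟩ := hc
  have hp : 0 < 1 + c := by linarith
  refine le_trans ?_ (le_logDeriv_powerSum (by linarith) ⟨by linarith, hc₃⟩)
  set t := (1 - c / 3) / (1 + c) with ht_def
  have ht₀ : 0 < t := div_pos (by linarith) hp
  have ht_third : t ≤ 1 / 3 := by rw [ht_def, div_le_iff₀ hp]; linarith
  have ht_sixth : t ≤ (3 - c) / 6 := by rw [ht_def, div_le_iff₀ hp]; nlinarith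
  have ht4 : t ^ 4 ≤ (3 - c) ^ 2 / 324 := by
    calc t ^ 4 = t ^ 2 * t ^ 2 := by ring
      _ ≤ (1 / 3) ^ 2 * ((3 - c) / 6) ^ 2 := by gcongr
      _ = (3 - c) ^ 2 / 324 := by ring
  have hexp : (1 / 3 : ℝ) ≤ Real.exp (-1) := by
    rw [Real.exp_neg, ← one_div]
    gcongr
    exact Real.exp_one_lt_three.le
  have htail : Q * t ^ (Q - 1) ≤ 5 * ((3 - c) ^ 2 / 324) := by
    calc Q * t ^ (Q - 1) ≤ ((4 : ℕ) + 1) * t ^ 4 :=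
          mul_rpow_sub_one_le_mul_pow ht₀ (ht_third.trans hexp) (by norm_num; exact hQ)
      _ ≤ ((4 : ℕ) + 1) * ((3 - c) ^ 2 / 324) := by gcongr
      _ = 5 * ((3 - c) ^ 2 / 324) := by norm_num
  gcongr Q / (1 + c) - ?_
  rw [div_le_div_iff₀ (by positivity) (by positivity)]
  calc 4 * (Q * t ^ (Q - 1)) * (30 * (1 + c))
      ≤ 4 * (5 * ((3 - c) ^ 2 / 324)) * (30 * (1 + c)) := by gcongr
    _ ≤ (3 - c) ^ 2 * (1 + c) ^ 2 := by
        nlinarith [mul_nonneg (mul_nonneg (sq_nonneg (3 - c)) hp.le) (sub_nonneg.2 hc₁)]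

end PowerSum

section ExpFactor

lemma q_pos {x : ℝ} (hx : x ≠ 0) : 0 < q x := by
  rw [q]
  linarith [Real.add_one_lt_exp hx]

lemma hasDerivAt_q (x : ℝ) : HasDerivAt q (Real.exp x - 1) x :=
  ((Real.hasDerivAt_exp x).sub (hasDerivAt_id x)).sub_const 1

-- This says `q'' q ≤ q' ^ 2`, that is, `q` is log-concave.
lemma exp_mul_q_le (x : ℝ) : Real.exp x * q x ≤ (Real.exp x - 1) ^ 2 := by
  have htangent : Real.exp x * (1 - x) ≤ 1 := by
    calc Real.exp x * (1 - x) ≤ Real.exp x * Real.exp (-x) := by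
          gcongr; exact Real.one_sub_le_exp_neg x
      _ = 1 := by rw [← Real.exp_add, add_neg_cancel, Real.exp_zero]
  rw [q]
  linear_combination htangent

lemma Qf_eq_mul_div_q (s : ℝ) : Qf s = s * (Real.exp s - 1) / q s := rfl

lemma lt_Qf {s : ℝ} (hs : 0 < s) : s < Qf s := by
  have hq : 0 < q s := q_pos hs.ne'
  rw [Qf_eq_mul_div_q, lt_div_iff₀ hq]
  gcongr
  rw [q]
  linarith

lemma q_div_q_le_exp_sub_one_div {x s : ℝ} (hx : 0 < x) (hxs : x ≤ s) :
    q x / q s ≤ (Real.exp x - 1) / (Real.exp s - 1) := by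
  have hs : 0 < s := hx.trans_le hxs
  have hexp : 0 < Real.exp s - 1 := sub_pos.2 (Real.one_lt_exp_iff.2 hs)
  have hslope : (Real.exp x - 1) / x ≤ (Real.exp s - 1) / s := by
    simpa using convexOn_exp.secant_mono (mem_univ 0) (mem_univ x) (mem_univ s) hx.ne' hs.ne' hxs
  rw [div_le_div_iff₀ hx hs] at hslope
  rw [div_le_div_iff₀ (q_pos hs.ne') hexp, q, q]
  linarith

/-- The first factor `3 q(s a) / q(s) + 1` of `OPT4`. -/
noncomputable def expFactor (s a : ℝ) : ℝ := 3 * q (s * a) / q s + 1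

variable {s a : ℝ}

lemma expFactor_pos (hs : 0 < s) (ha : 0 < a) : 0 < expFactor s a := by
  have hq : 0 < q s := q_pos hs.ne'
  have hqa : 0 < q (s * a) := q_pos (mul_pos hs ha).ne'
  rw [expFactor]
  positivity

lemma hasDerivAt_expFactor (hs : 0 < s) :
    HasDerivAt (expFactor s) (Qf s * (3 * ((Real.exp (s * a) - 1) / (Real.exp s - 1)))) a := by
  have hq : q s ≠ 0 := (q_pos hs.ne').ne'
  have hexp : Real.exp s - 1 ≠ 0 := (sub_pos.2 (Real.one_lt_exp_iff.2 hs)).ne'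
  have hcomp : HasDerivAt (fun b => q (s * b)) ((Real.exp (s * a) - 1) * (s * 1)) a :=
    (hasDerivAt_q (s * a)).comp a ((hasDerivAt_id a).const_mul s)
  refine (((hcomp.const_mul 3).div_const (q s)).add_const 1).congr_deriv ?_
  rw [Qf_eq_mul_div_q]
  field_simp

lemma one_sub_Qf_mul_le_exp_sub_one_div (hs : 0 < s) (ha : a ≤ 1) :
    1 - Qf s * (1 - a) ≤ (Real.exp (s * a) - 1) / (Real.exp s - 1) := by
  have hq : 0 < q s := q_pos hs.ne'
  have hexp : 0 < Real.exp s - 1 := sub_pos.2 (Real.one_lt_exp_iff.2 hs)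
  have hlogConcave : Real.exp s ≤ (Real.exp s - 1) ^ 2 / q s := by
    rw [le_div_iff₀ hq]
    exact exp_mul_q_le s
  have htangent : Real.exp s * (1 - s * (1 - a)) ≤ Real.exp (s * a) := by
    calc Real.exp s * (1 - s * (1 - a)) ≤ Real.exp s * Real.exp (-(s * (1 - a))) := by
          gcongr; exact Real.one_sub_le_exp_neg _
      _ = Real.exp (s * a) := by rw [← Real.exp_add]; ring_nf
  rw [le_div_iff₀ hexp]
  calc (1 - Qf s * (1 - a)) * (Real.exp s - 1)
      = Real.exp s - 1 - s * (1 - a) * ((Real.exp s - 1) ^ 2 / q s) := by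
        rw [Qf_eq_mul_div_q]; ring
    _ ≤ Real.exp s - 1 - s * (1 - a) * Real.exp s := by gcongr
    _ ≤ Real.exp (s * a) - 1 := by linarith

lemma le_logDeriv_expFactor (hs : 0 < s) (ha₀ : 0 < a) (ha : a ≤ 1)
    (hQa : Qf s * (1 - a) ≤ 1) :
    Qf s * (3 * (1 - Qf s * (1 - a)) / (4 - 3 * (Qf s * (1 - a)))) ≤ logDeriv (expFactor s) a := by
  have hQ : 0 ≤ Qf s := (hs.trans (lt_Qf hs)).le
  have hle : 1 - Qf s * (1 - a) ≤ (Real.exp (s * a) - 1) / (Real.exp s - 1) :=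
    one_sub_Qf_mul_le_exp_sub_one_div hs ha
  have hratio : q (s * a) / q s ≤ (Real.exp (s * a) - 1) / (Real.exp s - 1) :=
    q_div_q_le_exp_sub_one_div (mul_pos hs ha₀) (mul_le_of_le_one_right hs.le ha)
  have hpos : 0 < 3 * (q (s * a) / q s) + 1 := by
    rw [← mul_div_assoc]
    exact expFactor_pos hs ha₀
  rw [logDeriv_apply, (hasDerivAt_expFactor hs).deriv, mul_div_assoc (Qf s), expFactor,
    mul_div_assoc 3 (q (s * a))]
  generalize (Real.exp (s * a) - 1) / (Real.exp s - 1) = L at *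
  generalize q (s * a) / q s = R at *
  gcongr Qf s * ?_
  rw [div_le_div_iff₀ (by linarith) hpos]
  nlinarith [mul_nonneg (sub_nonneg.2 hQa) (sub_nonneg.2 hratio)]

end ExpFactor

section Line

/-- The line `a = A(c)` of the theorem, with the exponent as a free parameter. -/
noncomputable def lineA (Q c : ℝ) : ℝ := 7 * c / (30 * Q) + 1 - 7 / (10 * Q)

variable {Q c : ℝ}

lemma lineA_eq (Q c : ℝ) : lineA Q c = 1 - 7 / 30 * (3 - c) / Q := by
  rw [lineA]
  ring

lemma lineA_le_one (hQ : 0 < Q) (hc : c ≤ 3) : lineA Q c ≤ 1 := by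
  have : 0 ≤ 7 / 30 * (3 - c) / Q := div_nonneg (by linarith) hQ.le
  linarith [lineA_eq Q c]

lemma le_lineA (hQ : 5 ≤ Q) (hc : c ≤ 3) : 1 - (3 - c) / 20 ≤ lineA Q c := by
  rw [lineA_eq, sub_le_sub_iff_left, div_le_iff₀ (by linarith)]
  nlinarith

lemma lineA_pos (hQ : 5 ≤ Q) (hc : c ∈ Icc 1 3) : 0 < lineA Q c := by
  linarith [hc.1, le_lineA hQ hc.2]

lemma one_add_lineA_mul_pos (hQ : 5 ≤ Q) (hc : c ∈ Icc 1 3) : 0 < 1 + lineA Q c * c := by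
  have hA : 0 < lineA Q c := lineA_pos hQ hc
  nlinarith [hc.1]

lemma hasDerivAt_lineA (Q c : ℝ) : HasDerivAt (lineA Q) (7 / 30 / Q) c := by
  have hlin : HasDerivAt (fun x => 7 * x / (30 * Q)) (7 * 1 / (30 * Q)) c :=
    ((hasDerivAt_id c).const_mul 7).div_const (30 * Q)
  exact ((hlin.add_const 1).sub_const (7 / (10 * Q))).congr_deriv (by ring)

lemma hasDerivAt_one_add_lineA_mul (Q c : ℝ) :
    HasDerivAt (fun x => 1 + lineA Q x * x) (7 / 30 / Q * c + lineA Q c * 1) c :=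
  ((hasDerivAt_lineA Q c).mul (hasDerivAt_id c)).const_add 1

lemma div_one_add_sub_logDeriv_eq (hQ : Q ≠ 0) (hc : 1 + c ≠ 0) (hW : 1 + lineA Q c * c ≠ 0) :
    Q / (1 + c) - Q * logDeriv (fun x => 1 + lineA Q x * x) c
      = -(7 / 30 * ((c - 1) * (c + 3) / ((1 + c) * (1 + lineA Q c * c)))) := by
  have hnum : Q * (1 + lineA Q c * c) - (1 + c) * (Q * (7 / 30 / Q * c + lineA Q c * 1))
      = -(7 / 30 * ((c - 1) * (c + 3))) := by
    rw [lineA_eq]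
    field_simp
    ring
  rw [logDeriv_apply, (hasDerivAt_one_add_lineA_mul Q c).deriv, ← mul_div_assoc,
    div_sub_div _ _ hc hW, hnum, neg_div, mul_div_assoc]

lemma le_div_one_add_sub_logDeriv (hQ : 5 ≤ Q) (hc : c ∈ Icc 1 3) :
    -(7 / 30 * ((c - 1) * (c + 3) / ((1 + c) * (1 + (1 - (3 - c) / 20) * c))))
      ≤ Q / (1 + c) - Q * logDeriv (fun x => 1 + lineA Q x * x) c := by
  have hW : 1 + lineA Q c * c ≠ 0 := (one_add_lineA_mul_pos hQ hc).ne'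
  have hA : 1 - (3 - c) / 20 ≤ lineA Q c := le_lineA hQ hc.2
  have hc₁ : 1 ≤ c := hc.1
  have hp : 0 < 1 + c := by linarith
  have hnum : 0 ≤ (c - 1) * (c + 3) := mul_nonneg (by linarith) (by linarith)
  have hbase : 0 < 1 + (1 - (3 - c) / 20) * c := by nlinarith
  rw [div_one_add_sub_logDeriv_eq (by linarith) hp.ne' hW]
  gcongr

lemma differentiableAt_one_div_one_add_lineA_mul_rpow (hQ : 5 ≤ Q) (hc : c ∈ Icc 1 3) :
    DifferentiableAt ℝ (fun x => (1 / (1 + lineA Q x * x)) ^ Q) c := by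
  have hW : 0 < 1 + lineA Q c * c := one_add_lineA_mul_pos hQ hc
  exact ((differentiableAt_const 1).div
    (hasDerivAt_one_add_lineA_mul Q c).differentiableAt hW.ne').rpow_const
    (Or.inl (one_div_pos.2 hW).ne')

end Line

lemma polynomial_error_lt_gain {c : ℝ} (hc : c ∈ Ico 1 3) :
    (7 * ((c - 1) * (c + 3)) + (3 - c) ^ 2 * (1 + (1 - (3 - c) / 20) * c))
        * (4 - 3 * (7 / 30 * (3 - c)))
      < 21 * (1 - 7 / 30 * (3 - c)) * ((1 + c) * (1 + (1 - (3 - c) / 20) * c)) := by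
  obtain ⟨y, rfl⟩ : ∃ y, c = 3 - y := ⟨3 - c, by ring⟩
  have hy₀ : 0 < y := by linarith [hc.2]
  have hy₂ : y ≤ 2 := by linarith [hc.1]
  have hquot : 0 < 119 / 5 - 1271 / 100 * y + 927 / 200 * y ^ 2 - 19 / 25 * y ^ 3
      + 7 / 200 * y ^ 4 := by
    nlinarith [sq_nonneg (y - 2), pow_pos hy₀ 4, mul_nonneg (sq_nonneg y) (sub_nonneg.2 hy₂)]
  linear_combination mul_pos hy₀ hquot

lemma rational_error_lt_gain {c : ℝ} (hc : c ∈ Ico 1 3) :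
    7 / 30 * ((c - 1) * (c + 3) / ((1 + c) * (1 + (1 - (3 - c) / 20) * c)))
        + (3 - c) ^ 2 / (30 * (1 + c))
      < 7 / 30 * (3 * (1 - 7 / 30 * (3 - c)) / (4 - 3 * (7 / 30 * (3 - c)))) := by
  have hpoly := polynomial_error_lt_gain hc
  obtain ⟨hc₁, hc₃⟩ := hc
  have hp : 0 < 1 + c := by linarith
  have hW : 0 < 1 + (1 - (3 - c) / 20) * c := by nlinarith
  have hE : 0 < 4 - 3 * (7 / 30 * (3 - c)) := by linarith
  generalize 1 + (1 - (3 - c) / 20) * c = W at *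
  generalize 4 - 3 * (7 / 30 * (3 - c)) = E at *
  calc 7 / 30 * ((c - 1) * (c + 3) / ((1 + c) * W)) + (3 - c) ^ 2 / (30 * (1 + c))
      = (7 * ((c - 1) * (c + 3)) + (3 - c) ^ 2 * W) / (30 * ((1 + c) * W)) := by field_simp
    _ < 21 * (1 - 7 / 30 * (3 - c)) / (30 * E) := by
        rw [div_lt_div_iff₀ (by positivity) (by positivity)]
        linear_combination 30 * hpoly
    _ = 7 / 30 * (3 * (1 - 7 / 30 * (3 - c)) / E) := by field_simp; ring

section OPT

variable {s c : ℝ}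

lemma OPT4_eq_mul (a c s : ℝ) :
    OPT4 a c s = expFactor s a * (1 / (1 + a * c)) ^ Qf s * powerSum (Qf s) c := rfl

lemma differentiableAt_expFactor_lineA (hs : 0 < s) :
    DifferentiableAt ℝ (fun x => expFactor s (lineA (Qf s) x)) c :=
  ((hasDerivAt_expFactor hs).comp c (hasDerivAt_lineA (Qf s) c)).differentiableAt

lemma OPT4_lineA_pos (hs : 0 < s) (hQ : 5 ≤ Qf s) (hc : c ∈ Icc 1 3) :
    0 < OPT4 (lineA (Qf s) c) c s :=
  mul_pos (mul_pos (expFactor_pos hs (lineA_pos hQ hc))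
    (Real.rpow_pos_of_pos (one_div_pos.2 (one_add_lineA_mul_pos hQ hc)) _))
    (powerSum_pos ⟨by linarith [hc.1], hc.2⟩)

lemma differentiableAt_OPT4_lineA (hs : 0 < s) (hQ : 5 ≤ Qf s) (hc : c ∈ Icc 1 3) :
    DifferentiableAt ℝ (fun x => OPT4 (lineA (Qf s) x) x s) c :=
  ((differentiableAt_expFactor_lineA hs).mul
    (differentiableAt_one_div_one_add_lineA_mul_rpow hQ hc)).mul
    (hasDerivAt_powerSum (by linarith)).differentiableAt

lemma logDeriv_OPT4_lineA (hs : 0 < s) (hQ : 5 ≤ Qf s) (hc : c ∈ Icc 1 3) :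
    logDeriv (fun x => OPT4 (lineA (Qf s) x) x s) c
      = logDeriv (expFactor s) (lineA (Qf s) c) * (7 / 30 / Qf s)
        - Qf s * logDeriv (fun x => 1 + lineA (Qf s) x * x) c
        + logDeriv (powerSum (Qf s)) c := by
  have hW : 0 < 1 + lineA (Qf s) c * c := one_add_lineA_mul_pos hQ hc
  have hE : expFactor s (lineA (Qf s) c) ≠ 0 := (expFactor_pos hs (lineA_pos hQ hc)).ne'
  have hV : (1 / (1 + lineA (Qf s) c * c)) ^ Qf s ≠ 0 :=
    (Real.rpow_pos_of_pos (one_div_pos.2 hW) _).ne'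
  have hS : powerSum (Qf s) c ≠ 0 := (powerSum_pos ⟨by linarith [hc.1], hc.2⟩).ne'
  have hEd := differentiableAt_expFactor_lineA (c := c) hs
  have hVd := differentiableAt_one_div_one_add_lineA_mul_rpow hQ hc
  have hcomp : logDeriv (fun x => expFactor s (lineA (Qf s) x)) c
      = logDeriv (expFactor s) (lineA (Qf s) c) * (7 / 30 / Qf s) := by
    rw [← (hasDerivAt_lineA (Qf s) c).deriv]
    exact logDeriv_comp (hasDerivAt_expFactor hs).differentiableAt
      (hasDerivAt_lineA (Qf s) c).differentiableAt
  simp only [OPT4_eq_mul]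
  rw [logDeriv_mul (f := fun x => expFactor s (lineA (Qf s) x) *
      (1 / (1 + lineA (Qf s) x * x)) ^ Qf s) c (mul_ne_zero hE hV) hS (hEd.mul hVd)
      (hasDerivAt_powerSum (by linarith)).differentiableAt,
    logDeriv_mul c hE hV hEd hVd, hcomp, logDeriv_one_div_rpow_const
      (hasDerivAt_one_add_lineA_mul (Qf s) c).differentiableAt hW, sub_eq_add_neg]

lemma le_logDeriv_expFactor_lineA (hs : 0 < s) (hQ : 5 ≤ Qf s) (hc : c ∈ Icc 1 3) :
    7 / 30 * (3 * (1 - 7 / 30 * (3 - c)) / (4 - 3 * (7 / 30 * (3 - c))))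
      ≤ logDeriv (expFactor s) (lineA (Qf s) c) * (7 / 30 / Qf s) := by
  have hQ₀ : 0 < Qf s := by linarith
  have hv : Qf s * (1 - lineA (Qf s) c) = 7 / 30 * (3 - c) := by
    rw [lineA_eq, sub_sub_cancel, mul_div_cancel₀ _ hQ₀.ne']
  have hbound := le_logDeriv_expFactor hs (lineA_pos hQ hc) (lineA_le_one hQ₀ hc.2)
    (by linarith [hc.1])
  rw [hv] at hbound
  calc 7 / 30 * (3 * (1 - 7 / 30 * (3 - c)) / (4 - 3 * (7 / 30 * (3 - c))))
      = Qf s * (3 * (1 - 7 / 30 * (3 - c)) / (4 - 3 * (7 / 30 * (3 - c))))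
          * (7 / 30 / Qf s) := by
        rw [mul_right_comm, mul_div_cancel₀ _ hQ₀.ne']
    _ ≤ logDeriv (expFactor s) (lineA (Qf s) c) * (7 / 30 / Qf s) := by gcongr

lemma logDeriv_OPT4_lineA_pos (hs : 0 < s) (hQ : 5 ≤ Qf s) (hc : c ∈ Ico 1 3) :
    0 < logDeriv (fun x => OPT4 (lineA (Qf s) x) x s) c := by
  have hc' : c ∈ Icc 1 3 := Ico_subset_Icc_self hc
  have hexpFactor := le_logDeriv_expFactor_lineA hs hQ hc'
  have hpowerSum := le_logDeriv_powerSum_of_five_le hQ hc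
  have hcancel := le_div_one_add_sub_logDeriv hQ hc'
  rw [logDeriv_OPT4_lineA hs hQ hc']
  linarith [rational_error_lt_gain hc]

end OPT

theorem stmt17_general (s : ℝ) (hs : 0 < s) (hQ : 5 ≤ Qf s) :
    StrictMonoOn (fun c => OPT4 (7 * c / (30 * Qf s) + 1 - 7 / (10 * Qf s)) c s) (Icc 1 3) := by
  refine strictMonoOn_of_logDeriv_pos (convex_Icc 1 3)
    (fun c hc => (differentiableAt_OPT4_lineA hs hQ hc).continuousAt.continuousWithinAt)
    (fun c hc => OPT4_lineA_pos hs hQ (interior_subset hc))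
    (fun c hc => logDeriv_OPT4_lineA_pos hs hQ ?_)
  rw [interior_Icc] at hc
  exact Ioo_subset_Ico_self hc

theorem stmt17 (s : ℝ) (hs : 7 ≤ s) :
    StrictMonoOn (fun c => OPT4 (7*c/(30*Qf s) + 1 - 7/(10*Qf s)) c s)
      (Set.Ico (1:ℝ) 3) := by
  have hs₀ : 0 < s := by linarith
  exact (stmt17_general s hs₀ (by linarith [lt_Qf hs₀])).mono Ico_subset_Icc_self
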